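/- Let n ≥ 1 and q ∈ ℂ nonzero. For every d ∈ ℕ, the ℂ-subspace F_d of 𝔥_n(q) spanned by 1 together with all products of at most d generators is finite-dimensional of dimension Nat.choose (d + 3n) (3n). Consequently, for d ≥ 1 one has dim F_d − dim F_{d−1} = Nat.choose (d + 3n − 1) (3n − 1), so 𝔥_n(q) has polynomial growth of degree 3n and Hilbert series (1 − t)^{−3n}. -/

import Mathlib

noncomputable section

open scoped BigOperators

namespace QHeisenberg

/-- Index type for the `3n` generators: `x`-, `y`-, and `z`-variables. -/
abbrev GenIdx (n : ℕ) := Fin n ⊕ (Fin n ⊕ Fin n)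

/-- The `x_i` generator in the free algebra. -/
def fX (n : ℕ) (i : Fin n) : FreeAlgebra ℂ (GenIdx n) := FreeAlgebra.ι ℂ (Sum.inl i)

/-- The `y_i` generator in the free algebra. -/
def fY (n : ℕ) (i : Fin n) : FreeAlgebra ℂ (GenIdx n) := FreeAlgebra.ι ℂ (Sum.inr (Sum.inl i))

/-- The `z_i` generator in the free algebra. -/
def fZ (n : ℕ) (i : Fin n) : FreeAlgebra ℂ (GenIdx n) := FreeAlgebra.ι ℂ (Sum.inr (Sum.inr i))

/-- The defining relations of the q-Heisenberg algebra `𝔥_n(q)`. -/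
inductive Rel (n : ℕ) (q : ℂ) :
    FreeAlgebra ℂ (GenIdx n) → FreeAlgebra ℂ (GenIdx n) → Prop
  | xx (i j : Fin n) : Rel n q (fX n i * fX n j) (fX n j * fX n i)
  | yy (i j : Fin n) : Rel n q (fY n i * fY n j) (fY n j * fY n i)
  | zz (i j : Fin n) : Rel n q (fZ n i * fZ n j) (fZ n j * fZ n i)
  | xz (i : Fin n) : Rel n q (fX n i * fZ n i) (q • (fZ n i * fX n i))
  | yz (i : Fin n) : Rel n q (fY n i * fZ n i) (q⁻¹ • (fZ n i * fY n i))
  | xy (i : Fin n) : Rel n q (fX n i * fY n i) (q⁻¹ • (fY n i * fX n i) + fZ n i)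
  | xyne (i j : Fin n) : i ≠ j → Rel n q (fX n i * fY n j) (fY n j * fX n i)
  | xzne (i j : Fin n) : i ≠ j → Rel n q (fX n i * fZ n j) (fZ n j * fX n i)
  | yzne (i j : Fin n) : i ≠ j → Rel n q (fY n i * fZ n j) (fZ n j * fY n i)

/-- The q-Heisenberg algebra `𝔥_n(q)`. -/
abbrev H (n : ℕ) (q : ℂ) := RingQuot (Rel n q)

/-- The generator `x_i` of `𝔥_n(q)`. -/
def X (n : ℕ) (q : ℂ) (i : Fin n) : H n q := RingQuot.mkAlgHom ℂ (Rel n q) (fX n i)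

/-- The generator `y_i` of `𝔥_n(q)`. -/
def Y (n : ℕ) (q : ℂ) (i : Fin n) : H n q := RingQuot.mkAlgHom ℂ (Rel n q) (fY n i)

/-- The generator `z_i` of `𝔥_n(q)`. -/
def Z (n : ℕ) (q : ℂ) (i : Fin n) : H n q := RingQuot.mkAlgHom ℂ (Rel n q) (fZ n i)

/-- `q` is not a root of unity: `q ^ k ≠ 1` for every `k ≥ 1`. -/
def NotRootOfUnity (q : ℂ) : Prop := ∀ k : ℕ, 1 ≤ k → q ^ k ≠ 1

end QHeisenberg

namespace QHeisenberg

/-- The generating set `{x_i, y_i, z_i : 1 ≤ i ≤ n}` of `𝔥_n(q)`. -/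
def genSet (n : ℕ) (q : ℂ) : Set (H n q) :=
  Set.range (X n q) ∪ Set.range (Y n q) ∪ Set.range (Z n q)

/-- `F_d`: the `ℂ`-linear span of `1` together with all products of at most `d`
generators of `𝔥_n(q)` (the empty product being `1`). -/
def filtration (n : ℕ) (q : ℂ) (d : ℕ) : Submodule ℂ (H n q) :=
  Submodule.span ℂ
    {w | ∃ l : List (H n q), (∀ x ∈ l, x ∈ genSet n q) ∧ l.length ≤ d ∧ w = l.prod}

/-! ### A faithful-enough representation on the space spanned by multisets -/

/-- the coefficient `e_b = 1 + q⁻² + ... + q^{-2(b-1)}` -/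
def ecoef (q : ℂ) : ℕ → ℂ
  | 0 => 0
  | b + 1 => 1 + q⁻¹ * q⁻¹ * ecoef q b

abbrev xl {n : ℕ} (i : Fin n) : GenIdx n := Sum.inl i
abbrev yl {n : ℕ} (i : Fin n) : GenIdx n := Sum.inr (Sum.inl i)
abbrev zl {n : ℕ} (i : Fin n) : GenIdx n := Sum.inr (Sum.inr i)

/-- The space with basis the multisets of letters (ordered monomials). -/
abbrev V (n : ℕ) := Multiset (GenIdx n) →₀ ℂ

/-- basis vector -/
def bv {n : ℕ} (m : Multiset (GenIdx n)) : V n := Finsupp.single m 1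

/-- operators of the generators -/
def op (n : ℕ) (q : ℂ) : GenIdx n → Module.End ℂ (V n)
  | Sum.inl i => Finsupp.linearCombination ℂ fun m =>
      (q ^ (m.count (zl i)) * q⁻¹ ^ (m.count (yl i))) • bv (xl i ::ₘ m) +
      (q ^ (m.count (zl i)) * ecoef q (m.count (yl i))) • bv (zl i ::ₘ m.erase (yl i))
  | Sum.inr (Sum.inl i) => Finsupp.linearCombination ℂ fun m =>
      (q⁻¹ ^ (m.count (zl i))) • bv (yl i ::ₘ m)
  | Sum.inr (Sum.inr i) => Finsupp.linearCombination ℂ fun m => bv (zl i ::ₘ m)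

theorem op_x {n : ℕ} {q : ℂ} (i : Fin n) (m : Multiset (GenIdx n)) : op n q (Sum.inl i) (bv m) =
      (q ^ (m.count (zl i)) * q⁻¹ ^ (m.count (yl i))) • bv (xl i ::ₘ m) +
      (q ^ (m.count (zl i)) * ecoef q (m.count (yl i))) • bv (zl i ::ₘ m.erase (yl i)) := by
  simp [op, bv, Finsupp.linearCombination_single]

theorem op_y {n : ℕ} {q : ℂ} (i : Fin n) (m : Multiset (GenIdx n)) :
    op n q (Sum.inr (Sum.inl i)) (bv m) = (q⁻¹ ^ (m.count (zl i))) • bv (yl i ::ₘ m) := by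
  simp [op, bv, Finsupp.linearCombination_single]

theorem op_z {n : ℕ} {q : ℂ} (i : Fin n) (m : Multiset (GenIdx n)) :
    op n q (Sum.inr (Sum.inr i)) (bv m) = bv (zl i ::ₘ m) := by
  simp [op, bv, Finsupp.linearCombination_single]

theorem end_ext {n : ℕ} {f g : Module.End ℂ (V n)} (h : ∀ m, f (bv m) = g (bv m)) : f = g := by
  refine Finsupp.lhom_ext' fun m => LinearMap.ext_ring ?_
  simpa [bv] using h m

theorem op_rel (n : ℕ) (q : ℂ) (hq : q ≠ 0) {a b : FreeAlgebra ℂ (GenIdx n)} (h : Rel n q a b) :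
    FreeAlgebra.lift ℂ (op n q) a = FreeAlgebra.lift ℂ (op n q) b := by
  have hqq : q * q⁻¹ = 1 := mul_inv_cancel₀ hq
  induction h with
  | xx i j =>
    by_cases hij : i = j
    · subst hij; rfl
    have hji : j ≠ i := fun h => hij h.symm
    refine end_ext fun m => ?_
    simp only [fX, map_mul, FreeAlgebra.lift_ι_apply, Module.End.mul_apply, op_x, map_add, map_smul]
    simp [hij, hji, Multiset.count_cons, Multiset.erase_cons_tail, Multiset.count_erase_of_ne, Multiset.cons_swap (xl i) (xl j), Multiset.cons_swap (xl i) (zl j), Multiset.cons_swap (zl i) (xl j), Multiset.cons_swap (zl i) (zl j), Multiset.erase_comm m (yl i) (yl j)]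
    module
  | yy i j =>
    by_cases hij : i = j
    · subst hij; rfl
    have hji : j ≠ i := fun h => hij h.symm
    refine end_ext fun m => ?_
    simp only [fY, map_mul, FreeAlgebra.lift_ι_apply, Module.End.mul_apply, op_y, map_add, map_smul]
    simp [hij, hji, Multiset.count_cons, Multiset.cons_swap (yl i) (yl j)]
    module
  | zz i j =>
    refine end_ext fun m => ?_
    simp only [fZ, map_mul, FreeAlgebra.lift_ι_apply, Module.End.mul_apply, op_z]
    rw [Multiset.cons_swap]
  | xz i =>
    refine end_ext fun m => ?_
    simp only [fX, fZ, map_mul, FreeAlgebra.lift_ι_apply, Module.End.mul_apply, op_z, op_x, map_add, map_smul, LinearMap.smul_apply]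
    simp [Multiset.count_cons, Multiset.erase_cons_tail, Multiset.cons_swap (xl i) (zl i)]
    module
  | yz i =>
    refine end_ext fun m => ?_
    simp only [fY, fZ, map_mul, FreeAlgebra.lift_ι_apply, Module.End.mul_apply, op_z, op_y, map_add, map_smul, LinearMap.smul_apply]
    simp only [Multiset.cons_swap (yl i) (zl i), Multiset.count_cons_self]
    module
  | xy i =>
    refine end_ext fun m => ?_
    simp only [fX, fY, fZ, map_mul, FreeAlgebra.lift_ι_apply, Module.End.mul_apply, op_z, op_x, op_y, map_add, map_smul, LinearMap.smul_apply, LinearMap.add_apply]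
    have h1 : q ^ m.count (zl i) * q⁻¹ ^ m.count (zl i) = 1 := by
      rw [← mul_pow, hqq, one_pow]
    by_cases hy : yl i ∈ m
    · simp only [Multiset.erase_cons_head, Multiset.cons_swap (yl i) (zl i), Multiset.cons_erase hy, Multiset.count_cons_self,
        Multiset.cons_swap (xl i) (yl i)]
      simp [Multiset.count_cons, Multiset.count_erase_of_ne, ecoef, smul_smul, -inv_pow, -mul_inv_rev]
      match_scalars
      · ring
      · linear_combination (1 + q⁻¹ * q⁻¹ * ecoef q (m.count (yl i))- q⁻¹ * q⁻¹ * ecoef q (m.count (yl i))) * h1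
    · have h0 : m.count (yl i) = 0 := Multiset.count_eq_zero.2 hy
      simp only [Multiset.erase_cons_head, Multiset.count_cons_self,
        Multiset.cons_swap (xl i) (yl i), h0]
      simp [Multiset.count_cons, h0, ecoef, smul_smul, -inv_pow, -mul_inv_rev]
      match_scalars
      · ring
      · linear_combination h1
  | xyne i j hij =>
    have hji : j ≠ i := fun h => hij h.symm
    refine end_ext fun m => ?_
    simp only [fX, fY, map_mul, FreeAlgebra.lift_ι_apply, Module.End.mul_apply, op_x, op_y, map_add, map_smul]
    simp [hij, hji, Multiset.count_cons, Multiset.erase_cons_tail, Multiset.count_erase_of_ne, Multiset.cons_swap (xl i) (yl j), Multiset.cons_swap (zl i) (yl j)]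
    module
  | xzne i j hij =>
    have hji : j ≠ i := fun h => hij h.symm
    refine end_ext fun m => ?_
    simp only [fX, fZ, map_mul, FreeAlgebra.lift_ι_apply, Module.End.mul_apply, op_x, op_z, map_add, map_smul]
    simp [hij, hji, Multiset.count_cons, Multiset.erase_cons_tail, Multiset.cons_swap (xl i) (zl j), Multiset.cons_swap (zl i) (zl j)]
  | yzne i j hij =>
    have hji : j ≠ i := fun h => hij h.symm
    refine end_ext fun m => ?_
    simp only [fY, fZ, map_mul, FreeAlgebra.lift_ι_apply, Module.End.mul_apply, op_y, op_z, map_add, map_smul]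
    simp [hij, hji, Multiset.count_cons, Multiset.cons_swap (yl i) (zl j)]

/-- generator -/
def gen (n : ℕ) (q : ℂ) (s : GenIdx n) : H n q :=
  RingQuot.mkAlgHom ℂ (Rel n q) (FreeAlgebra.ι ℂ s)

/-- word -/
def word (n : ℕ) (q : ℂ) (l : List (GenIdx n)) : H n q := (l.map (gen n q)).prod

/-- the representation -/
def rep (n : ℕ) (q : ℂ) (hq : q ≠ 0) : H n q →ₐ[ℂ] Module.End ℂ (V n) :=
  RingQuot.liftAlgHom ℂ ⟨FreeAlgebra.lift ℂ (op n q), fun _ _ h => op_rel n q hq h⟩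

theorem rep_gen {n : ℕ} {q : ℂ} (hq : q ≠ 0) (s : GenIdx n) :
    rep n q hq (gen n q s) = op n q s := by
  simp [rep, gen]

theorem genSet_eq (n : ℕ) (q : ℂ) : genSet n q = Set.range (gen n q) := by
  ext a
  simp only [genSet, Set.mem_union, Set.mem_range, Sum.exists, or_assoc]
  rfl

theorem filtration_eq (n : ℕ) (q : ℂ) (d : ℕ) :
    filtration n q d = Submodule.span ℂ (word n q '' {l | l.length ≤ d}) := by
  unfold filtration
  congr 1
  ext a
  constructor
  · rintro ⟨l, h1, h2, rfl⟩
    rw [genSet_eq] at h1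
    obtain ⟨l', rfl⟩ : l ∈ Set.range (List.map (gen n q)) := by
      rw [Set.range_list_map]; exact h1
    exact ⟨l', by simpa using h2, rfl⟩
  · rintro ⟨l, h1, rfl⟩
    refine ⟨l.map (gen n q), ?_, by simpa using h1, rfl⟩
    rw [genSet_eq]
    intro x hx
    obtain ⟨a, _, rfl⟩ := List.mem_map.1 hx
    exact ⟨a, rfl⟩

theorem word_mem {n : ℕ} {q : ℂ} {d : ℕ} {l : List (GenIdx n)} (h : l.length ≤ d) :
    word n q l ∈ filtration n q d := by
  rw [filtration_eq]
  exact Submodule.subset_span ⟨l, h, rfl⟩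

theorem filtration_mono {n : ℕ} {q : ℂ} {d e : ℕ} (h : d ≤ e) :
    filtration n q d ≤ filtration n q e := by
  rw [filtration_eq n q d, Submodule.span_le]
  rintro _ ⟨l, hl, rfl⟩
  exact word_mem (le_trans hl h)

theorem gen_mul_mem {n : ℕ} {q : ℂ} {d : ℕ} (s : GenIdx n) {a : H n q}
    (h : a ∈ filtration n q d) : gen n q s * a ∈ filtration n q (d + 1) := by
  rw [filtration_eq] at h
  induction h using Submodule.span_induction with
  | mem x hx =>
    obtain ⟨l, hl, rfl⟩ := hx
    have : gen n q s * word n q l = word n q (s :: l) := by simp [word]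
    rw [this]
    exact word_mem (by simpa using hl)
  | zero => simp
  | add x y _ _ hx hy => rw [mul_add]; exact add_mem hx hy
  | smul c x _ hx => rw [mul_smul_comm]; exact Submodule.smul_mem _ _ hx

/-- Generators commute up to scalar and a linear term. -/
theorem gen_swap (n : ℕ) (q : ℂ) (hq : q ≠ 0) (s t : GenIdx n) :
    ∃ c e : ℂ, ∃ u : GenIdx n,
      gen n q s * gen n q t = c • (gen n q t * gen n q s) + e • gen n q u := by
  have key : ∀ {a b}, Rel n q a b → RingQuot.mkAlgHom ℂ (Rel n q) a =
    RingQuot.mkAlgHom ℂ (Rel n q) b := fun h => RingQuot.mkAlgHom_rel ℂ h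
  have com : ∀ {s t : GenIdx n}, Rel n q (FreeAlgebra.ι ℂ s * FreeAlgebra.ι ℂ t)
      (FreeAlgebra.ι ℂ t * FreeAlgebra.ι ℂ s) → gen n q s * gen n q t = gen n q t * gen n q s := by
    intro s t h
    simpa [gen] using key h
  have com' : ∀ {s t : GenIdx n}, gen n q s * gen n q t = gen n q t * gen n q s →
     ∃ c e : ℂ, ∃ u : GenIdx n,
      gen n q s * gen n q t = c • (gen n q t * gen n q s) + e • gen n q u := by
    intro s t h
    exact ⟨1, 0, s, by simp [h]⟩
  have kxz : ∀ i, gen n q (xl i) * gen n q (zl i) = q • (gen n q (zl i) * gen n q (xl i)) := by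
    intro i
    simpa [gen, fX, fZ] using key (Rel.xz i)
  have kyz : ∀ i, gen n q (yl i) * gen n q (zl i) = q⁻¹ • (gen n q (zl i) * gen n q (yl i)) := by
    intro i
    simpa [gen, fY, fZ] using key (Rel.yz i)
  have kxy : ∀ i, gen n q (xl i) * gen n q (yl i) = q⁻¹ • (gen n q (yl i) * gen n q (xl i))
      + gen n q (zl i) := by
    intro i
    simpa [gen, fX, fY, fZ] using key (Rel.xy i)
  rcases s with i | i | i <;> rcases t with j | j | j
  · exact com' (com (Rel.xx i j))
  · by_cases h : i = j
    · subst h; exact ⟨q⁻¹, 1, zl i, by rw [kxy, one_smul]⟩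
    · exact com' (com (Rel.xyne i j h))
  · by_cases h : i = j
    · subst h; exact ⟨q, 0, zl i, by rw [kxz, zero_smul, add_zero]⟩
    · exact com' (com (Rel.xzne i j h))
  · by_cases h : i = j
    · subst h; exact ⟨q, -q, zl i, by
        rw [kxy, smul_add, smul_smul, mul_inv_cancel₀ hq, one_smul, add_assoc, ← add_smul,
          add_neg_cancel, zero_smul, add_zero]⟩
    · exact com' (com (Rel.xyne j i (Ne.symm h))).symm
  · exact com' (com (Rel.yy i j))
  · by_cases h : i = j
    · subst h; exact ⟨q⁻¹, 0, zl i, by rw [kyz, zero_smul, add_zero]⟩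
    · exact com' (com (Rel.yzne i j h))
  · by_cases h : i = j
    · subst h; exact ⟨q⁻¹, 0, zl i, by
        rw [kxz, smul_smul, inv_mul_cancel₀ hq, one_smul, zero_smul, add_zero]⟩
    · exact com' (com (Rel.xzne j i (Ne.symm h))).symm
  · by_cases h : i = j
    · subst h; exact ⟨q, 0, zl i, by
        rw [kyz, smul_smul, mul_inv_cancel₀ hq, one_smul, zero_smul, add_zero]⟩
    · exact com' (com (Rel.yzne j i (Ne.symm h))).symm
  · exact com' (com (Rel.zz i j))

theorem word_perm (n : ℕ) (q : ℂ) (hq : q ≠ 0) {l l' : List (GenIdx n)} (h : l.Perm l') :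
    ∀ d, l.length ≤ d + 1 → ∃ c : ℂ, word n q l - c • word n q l' ∈ filtration n q d := by
  induction h with
  | nil => intro d _; exact ⟨1, by simp⟩
  | @cons s l l' hp ih =>
    intro d hd
    rcases d with _ | d
    · have h1 : l = [] := by
        have : l.length = 0 := by simpa using hd
        exact List.length_eq_zero_iff.1 this
      subst h1
      have h2 : l' = [] := by simpa using hp
      subst h2
      exact ⟨1, by simp⟩
    · obtain ⟨c, hc⟩ := ih d (by simpa using hd)
      refine ⟨c, ?_⟩
      have := gen_mul_mem s hc
      simpa [word, mul_sub] using this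
  | swap s t l =>
    intro d hd
    obtain ⟨c, e, u, h⟩ := gen_swap n q hq t s
    refine ⟨c, ?_⟩
    have : word n q (t :: s :: l) - c • word n q (s :: t :: l) = e • word n q (u :: l) := by
      simp only [word, List.map_cons, List.prod_cons, ← mul_assoc, h, add_mul, smul_mul_assoc]
      simp
    rw [this]
    refine Submodule.smul_mem _ _ (word_mem ?_)
    simpa using hd
  | @trans l1 l2 l3 h1 h2 ih1 ih2 =>
    intro d hd
    obtain ⟨c, hc⟩ := ih1 d hd
    obtain ⟨c', hc'⟩ := ih2 d (h1.length_eq ▸ hd)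
    refine ⟨c * c', ?_⟩
    have := add_mem hc (Submodule.smul_mem _ c hc')
    have e : word n q l1 - c • word n q l2 + c • (word n q l2 - c' • word n q l3) =
      word n q l1 - (c * c') • word n q l3 := by module
    rwa [e] at this

/-- index type of monomials of degree at most `d` -/
abbrev Idx (n d : ℕ) := Σ k : Fin (d + 1), Sym (GenIdx n) k

/-- underlying multiset -/
def Idx.val {n d : ℕ} (a : Idx n d) : Multiset (GenIdx n) := a.2.1

theorem Idx.val_injective (n d : ℕ) : Function.Injective (Idx.val : Idx n d → _) := by
  rintro ⟨⟨k, hk⟩, ⟨m, hm⟩⟩ ⟨⟨k', hk'⟩, ⟨m', hm'⟩⟩ h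
  simp only [Idx.val] at h
  subst h
  simp only at hm hm'
  subst hm
  subst hm'
  rfl

theorem Idx.exists_val {n d : ℕ} {m : Multiset (GenIdx n)} (h : m.card ≤ d) :
    ∃ a : Idx n d, a.val = m :=
  ⟨⟨⟨m.card, by omega⟩, ⟨m, rfl⟩⟩, rfl⟩

theorem Idx.card_le {n d : ℕ} (a : Idx n d) : a.val.card ≤ d := by
  have := a.2.2
  have h2 := a.1.2
  simp only [Idx.val]
  omega

theorem card_Idx (n d : ℕ) : Fintype.card (Idx n d) = Nat.choose (d + 3 * n) (3 * n) := by
  have h : ∀ N d : ℕ, ∑ k ∈ Finset.range (d + 1), Nat.multichoose N k = Nat.multichoose (N + 1) d := by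
    intro N d
    induction d with
    | zero => simp
    | succ d ih => rw [Finset.sum_range_succ, ih, Nat.multichoose_succ_succ, add_comm]
  rw [Fintype.card_sigma]
  simp only [Sym.card_sym_eq_multichoose]
  rw [Fin.sum_univ_eq_sum_range (fun k => Nat.multichoose (Fintype.card (GenIdx n)) k), h,
    Nat.multichoose_eq]
  have : Fintype.card (GenIdx n) = 3 * n := by simp; ring
  rw [this, show 3 * n + 1 + d - 1 = 3 * n + d by omega, add_comm d, Nat.choose_symm_add]

theorem filtration_le (n : ℕ) (q : ℂ) (hq : q ≠ 0) (d : ℕ) :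
    filtration n q d ≤
      Submodule.span ℂ (Set.range fun a : Idx n d => word n q a.val.toList) := by
  induction d with
  | zero =>
    rw [filtration_eq, Submodule.span_le]
    rintro _ ⟨l, hl, rfl⟩
    have : l = [] := by simpa using hl
    subst this
    obtain ⟨a, ha⟩ := Idx.exists_val (n := n) (d := 0) (m := 0) (by simp)
    exact Submodule.subset_span ⟨a, by simp [ha]⟩
  | succ d ih =>
    have ih' : filtration n q d ≤
        Submodule.span ℂ (Set.range fun a : Idx n (d + 1) => word n q a.val.toList) := by
      refine ih.trans (Submodule.span_mono ?_)
      rintro _ ⟨a, rfl⟩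
      obtain ⟨b, hb⟩ := Idx.exists_val (n := n) (d := d + 1) (m := a.val)
        (by have := a.card_le; omega)
      exact ⟨b, by simp [hb]⟩
    rw [filtration_eq, Submodule.span_le]
    rintro _ ⟨l, hl, rfl⟩
    obtain ⟨a, ha⟩ := Idx.exists_val (n := n) (d := d + 1) (m := (l : Multiset (GenIdx n)))
      (by simpa using hl)
    have hp : l.Perm a.val.toList := by
      rw [← Multiset.coe_eq_coe, Multiset.coe_toList, ha]
    obtain ⟨c, hc⟩ := word_perm n q hq hp d hl
    have h1 : c • word n q a.val.toList ∈
        Submodule.span ℂ (Set.range fun a : Idx n (d + 1) => word n q a.val.toList) :=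
      Submodule.smul_mem _ _ (Submodule.subset_span ⟨a, rfl⟩)
    have := add_mem (ih' hc) h1
    rwa [sub_add_cancel] at this

/-- evaluation at the vacuum -/
def ev (n : ℕ) (q : ℂ) (hq : q ≠ 0) : H n q →ₗ[ℂ] V n :=
  (LinearMap.applyₗ (bv (0 : Multiset (GenIdx n)))).comp (rep n q hq).toLinearMap

theorem op_mem {n : ℕ} {q : ℂ} (hq : q ≠ 0) {d : ℕ} (s : GenIdx n) {v : V n}
    (h : v ∈ (filtration n q d).map (ev n q hq)) :
    op n q s v ∈ (filtration n q (d + 1)).map (ev n q hq) := by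
  obtain ⟨a, ha, rfl⟩ := h
  exact ⟨gen n q s * a, gen_mul_mem s ha, by simp [ev, rep_gen]⟩

theorem bv_mem {n : ℕ} {q : ℂ} (hq : q ≠ 0) (d : ℕ) :
    ∀ m : Multiset (GenIdx n), m.card ≤ d → bv m ∈ (filtration n q d).map (ev n q hq) := by
  induction d with
  | zero =>
    intro m hm
    have : m = 0 := by simpa using hm
    subst this
    exact ⟨word n q [], word_mem (by simp), by simp [ev, word]⟩
  | succ d ih =>
    intro m hm
    have mono := Submodule.map_mono (f := ev n q hq) (filtration_mono (n := n) (q := q) (Nat.le_succ d))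
    induction m using Multiset.induction with
    | empty => exact mono (ih 0 (by simp))
    | cons s m _ =>
      have hm' : m.card ≤ d := by simpa using hm
      have h1 := op_mem hq s (ih m hm')
      rcases s with i | i | i
      · rw [op_x] at h1
        have h2 : (q ^ (m.count (zl i)) * ecoef q (m.count (yl i))) • bv (zl i ::ₘ m.erase (yl i)) ∈
            (filtration n q (d + 1)).map (ev n q hq) := by
          by_cases hy : yl i ∈ m
          · refine Submodule.smul_mem _ _ (mono (ih _ ?_))
            have := Multiset.card_erase_add_one hy
            rw [Multiset.card_cons]
            omega
          · simp [Multiset.count_eq_zero.2 hy, ecoef]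
        have h3 := (Submodule.add_mem_iff_left _ h2).1 h1
        exact (Submodule.smul_mem_iff _ (mul_ne_zero (pow_ne_zero _ hq)
          (pow_ne_zero _ (inv_ne_zero hq)))).1 h3
      · rw [op_y] at h1
        exact (Submodule.smul_mem_iff _ (pow_ne_zero _ (inv_ne_zero hq))).1 h1
      · rwa [op_z] at h1

theorem filtration_fin (n : ℕ) (q : ℂ) (hq : q ≠ 0) (d : ℕ) :
    FiniteDimensional ℂ (filtration n q d) :=
  haveI := FiniteDimensional.span_of_finite ℂ
    (Set.finite_range fun a : Idx n d => word n q a.val.toList)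
  Submodule.finiteDimensional_of_le (filtration_le n q hq d)

theorem filtration_finrank (n : ℕ) (q : ℂ) (hq : q ≠ 0) (d : ℕ) :
    Module.finrank ℂ (filtration n q d) = Nat.choose (d + 3 * n) (3 * n) := by
  haveI := FiniteDimensional.span_of_finite ℂ
    (Set.finite_range fun a : Idx n d => word n q a.val.toList)
  haveI := filtration_fin n q hq d
  rw [← card_Idx]
  apply le_antisymm
  · exact (Submodule.finrank_mono (filtration_le n q hq d)).trans (finrank_range_le_card _)
  · have li : LinearIndependent ℂ (fun a : Idx n d => (bv a.val : V n)) :=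
by
      have := (Finsupp.basisSingleOne (R := ℂ) (ι := Multiset (GenIdx n))).linearIndependent.comp _
        (Idx.val_injective n d)
      simpa [Function.comp_def, bv] using this
    rw [← finrank_span_eq_card li]
    refine (Submodule.finrank_mono ?_).trans (Submodule.finrank_map_le (ev n q hq) (filtration n q d))
    rw [Submodule.span_le]
    rintro _ ⟨a, rfl⟩
    exact bv_mem hq d _ a.card_le

/-- For every `d`, the subspace `F_d` is finite-dimensional of dimension
`(d + 3n).choose (3n)`; consequently for `d ≥ 1` one has
`dim F_d - dim F_{d-1} = (d + 3n - 1).choose (3n - 1)`, so `𝔥_n(q)` has polynomial growth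
of degree `3n` and Hilbert series `(1 - t)⁻³ⁿ`. -/
theorem filtration_dimension (n : ℕ) (hn : 1 ≤ n) (q : ℂ) (hq : q ≠ 0) :
    (∀ d : ℕ, FiniteDimensional ℂ (filtration n q d) ∧
        Module.finrank ℂ (filtration n q d) = Nat.choose (d + 3 * n) (3 * n)) ∧
      ∀ d : ℕ, 1 ≤ d →
        Module.finrank ℂ (filtration n q d) - Module.finrank ℂ (filtration n q (d - 1)) =
          Nat.choose (d + 3 * n - 1) (3 * n - 1) := by
  refine ⟨fun d => ⟨filtration_fin n q hq d, filtration_finrank n q hq d⟩, fun d hd => ?_⟩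
  rw [filtration_finrank n q hq, filtration_finrank n q hq]
  obtain ⟨d, rfl⟩ : ∃ e, d = e + 1 := ⟨d - 1, by omega⟩
  obtain ⟨k, hk⟩ : ∃ k, 3 * n = k + 1 := ⟨3 * n - 1, by omega⟩
  rw [hk, show d + 1 + (k + 1) = (d + (k + 1)) + 1 by omega, Nat.choose_succ_succ]
  simp

end QHeisenberg
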